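/- arXiv:math/0703592 — 4 statements merged into one kernel-verified Lean document; each statement's English description precedes it below -/
import Mathlib

section
/- Let m ≥ 4 be even and let P = {x_1, x_2, …, x_m} with x_1 < x_2 < ⋯ < x_m be a period-m orbit of f. If f does not interchange the two halves of P, i.e. it is not the case that f maps {x_1, …, x_{m/2}} onto {x_{(m/2)+1}, …, x_m} and maps {x_{(m/2)+1}, …, x_m} onto {x_1, …, x_{m/2}}, then f has a period-(m−1) point. -/
/-- `x` is a periodic point of `f` with least period `m`. -/
def PeriodPt (f : ℝ → ℝ) (m : ℕ) (x : ℝ) : Prop :=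
  f^[m] x = x ∧ ∀ i : ℕ, 0 < i → i < m → f^[i] x ≠ x

/-- The basic interval `j` covers the basic interval `k`. -/
def EdgeRel (m : ℕ) (σ : ℕ → ℕ) (j k : ℕ) : Prop :=
  (1 ≤ j ∧ j < m) ∧ (1 ≤ k ∧ k < m) ∧
    ((σ j ≤ k ∧ k + 1 ≤ σ (j + 1)) ∨ (σ (j + 1) ≤ k ∧ k + 1 ≤ σ j))

/-- `k` is reachable from `s` in exactly `n` steps. -/
def ReachN (m : ℕ) (σ : ℕ → ℕ) (s : ℕ) : ℕ → ℕ → Prop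
  | 0, k => k = s
  | n + 1, k => ∃ j, ReachN m σ s n j ∧ EdgeRel m σ j k

lemma discrete_ivt (P : ℕ → Prop) (i j : ℕ) (hij : i ≤ j) (hi : P i) (hj : ¬ P j) :
    ∃ k, i ≤ k ∧ k < j ∧ P k ∧ ¬ P (k + 1) := by
  induction j, hij using Nat.le_induction with
  | base => exact absurd hi hj
  | succ n hn ih =>
    by_cases h : P n
    · exact ⟨n, hn, by omega, h, hj⟩
    · obtain ⟨k, h1, h2, h3, h4⟩ := ih h
      exact ⟨k, h1, by omega, h3, h4⟩

/-- Between an index mapped to at most `k` and one mapped above `k` some basic interval covers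
`k`. -/
lemma crossing (m : ℕ) (σ : ℕ → ℕ) (k l r i j : ℕ) (hl : 1 ≤ l) (hr : r ≤ m)
    (hk : 1 ≤ k ∧ k < m) (hi : l ≤ i ∧ i ≤ r) (hj : l ≤ j ∧ j ≤ r)
    (h1 : σ i ≤ k) (h2 : k + 1 ≤ σ j) : ∃ t, l ≤ t ∧ t < r ∧ EdgeRel m σ t k := by
  rcases le_total i j with h | h
  · obtain ⟨t, a, b, c, d⟩ := discrete_ivt (fun t => σ t ≤ k) i j h h1 (by omega)
    exact ⟨t, by omega, by omega, ⟨by omega, by omega⟩, hk, Or.inl ⟨c, by omega⟩⟩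
  · obtain ⟨t, a, b, c, d⟩ := discrete_ivt (fun t => ¬ σ t ≤ k) j i h (by omega)
      (by omega)
    simp only [not_not] at c d
    exact ⟨t, by omega, by omega, ⟨by omega, by omega⟩, hk, Or.inr ⟨d, by omega⟩⟩

lemma reach_extend (m : ℕ) (σ : ℕ → ℕ) (s : ℕ) (hs : EdgeRel m σ s s) (n : ℕ) :
    ∀ k, ReachN m σ s n k → ReachN m σ s (n + 1) k := by
  induction n with
  | zero =>
    intro k hk
    have hk' : k = s := hk
    subst hk'
    exact ⟨k, rfl, hs⟩
  | succ n ih =>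
    rintro k ⟨j, hj, e⟩
    exact ⟨j, ih j hj, e⟩

lemma reach_all (m : ℕ) (σ : ℕ → ℕ) (s : ℕ)
    (hmap : ∀ i, 1 ≤ i → i ≤ m → 1 ≤ σ i ∧ σ i ≤ m)
    (htrans : ∀ i j, 1 ≤ i → i ≤ m → 1 ≤ j → j ≤ m → ∃ n, σ^[n] i = j)
    (hs1 : 1 ≤ s) (hsm : s < m) (hs2 : s + 1 ≤ σ s) (hs3 : σ (s + 1) ≤ s)
    (hs : EdgeRel m σ s s) (n : ℕ) (hn : n + 2 ≤ m) :
    ∃ l r, 1 ≤ l ∧ l ≤ s ∧ s + 1 ≤ r ∧ r ≤ m ∧ l + n + 1 ≤ r ∧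
      ∀ k, l ≤ k → k < r → ReachN m σ s n k := by
  induction n with
  | zero =>
    refine ⟨s, s + 1, hs1, le_rfl, le_rfl, hsm, by omega, ?_⟩
    intro k h1 h2
    show k = s
    omega
  | succ n ih =>
    obtain ⟨l, r, a1, a2, a3, a4, a5, a6⟩ := ih (by omega)
    by_cases hbig : l + n + 2 ≤ r
    · exact ⟨l, r, a1, a2, a3, a4, by omega, fun k h1 h2 => reach_extend m σ s hs n k (a6 k h1 h2)⟩
    have hex : ∃ i, l ≤ i ∧ i ≤ r ∧ (σ i < l ∨ r < σ i) := by
      by_contra hcon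
      push Not at hcon
      have hinv : ∀ n, l ≤ σ^[n] s ∧ σ^[n] s ≤ r := by
        intro n
        induction n with
        | zero => simp; omega
        | succ n ih2 =>
          rw [Function.iterate_succ_apply']
          exact hcon _ ih2.1 ih2.2
      obtain ⟨n1, h1⟩ := htrans s 1 hs1 (by omega) le_rfl (by omega)
      obtain ⟨n2, h2⟩ := htrans s m hs1 (by omega) (by omega) le_rfl
      have := hinv n1
      have := hinv n2
      omega
    obtain ⟨i, i1, i2, i3⟩ := hex
    have hi := hmap i (by omega) (by omega)
    rcases i3 with h | h
    · obtain ⟨t, t1, t2, t3⟩ := crossing m σ (l - 1) l r i s a1 a4 (by omega) ⟨i1, i2⟩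
        (by omega) (by omega) (by omega)
      refine ⟨l - 1, r, by omega, by omega, a3, a4, by omega, ?_⟩
      intro k h1 h2
      by_cases hk : k = l - 1
      · subst hk; exact ⟨t, a6 t t1 t2, t3⟩
      · exact reach_extend m σ s hs n k (a6 k (by omega) h2)
    · obtain ⟨t, t1, t2, t3⟩ := crossing m σ r l r (s + 1) i a1 a4 (by omega) (by omega)
        ⟨i1, i2⟩ (by omega) (by omega)
      refine ⟨l, r + 1, by omega, by omega, by omega, by omega, by omega, ?_⟩
      intro k h1 h2
      by_cases hk : k = r
      · subst hk; exact ⟨t, a6 t t1 t2, t3⟩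
      · exact reach_extend m σ s hs n k (a6 k h1 (by omega))

lemma reach_path (m : ℕ) (σ : ℕ → ℕ) (s : ℕ) (n : ℕ) : ∀ k, ReachN m σ s n k →
    ∃ K : ℕ → ℕ, K 0 = s ∧ K n = k ∧ (∀ i < n, EdgeRel m σ (K i) (K (i + 1))) ∧
      ∀ i ≤ n, ReachN m σ s i (K i) := by
  induction n with
  | zero =>
    intro k hk
    have hk' : k = s := hk
    refine ⟨fun _ => s, rfl, hk'.symm, by simp, ?_⟩
    intro i hi
    obtain rfl : i = 0 := by omega
    rfl
  | succ n ih =>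
    rintro k ⟨j, hj, e⟩
    obtain ⟨K, k0, kn, ke, kr⟩ := ih j hj
    refine ⟨fun i => if i ≤ n then K i else k, by simp [k0], by simp, ?_, ?_⟩
    · intro i hi
      by_cases h : i = n
      · subst h; simp [kn, e]
      · have h1 : i ≤ n := by omega
        have h2 : i + 1 ≤ n := by omega
        simp only [h1, h2, if_true]
        exact ke i (by omega)
    · intro i hi
      by_cases h : i ≤ n
      · simp only [h, if_true]; exact kr i h
      · obtain rfl : i = n + 1 := by omega
        simp only [h, if_false]
        exact ⟨j, hj, e⟩

lemma main_path (m : ℕ) (hm : 2 ≤ m) (σ : ℕ → ℕ) (s : ℕ)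
    (hmap : ∀ i, 1 ≤ i → i ≤ m → 1 ≤ σ i ∧ σ i ≤ m)
    (htrans : ∀ i j, 1 ≤ i → i ≤ m → 1 ≤ j → j ≤ m → ∃ n, σ^[n] i = j)
    (hs1 : 1 ≤ s) (hsm : s < m) (hs2 : s + 1 ≤ σ s) (hs3 : σ (s + 1) ≤ s)
    (hs : EdgeRel m σ s s) (J : ℕ) (hJs : J ≠ s) (hJ : EdgeRel m σ J s) :
    ∃ K : ℕ → ℕ, K 0 = s ∧ (∀ i < m - 2, EdgeRel m σ (K i) (K (i + 1))) ∧
      EdgeRel m σ (K (m - 2)) s ∧ ∀ i < m - 2, K i ≠ K (m - 2) := by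
  classical
  have hex : ∃ n, ∃ k, k ≠ s ∧ ReachN m σ s n k ∧ EdgeRel m σ k s := by
    obtain ⟨l, r, a1, a2, a3, a4, a5, a6⟩ :=
      reach_all m σ s hmap htrans hs1 hsm hs2 hs3 hs (m - 2) (by omega)
    have := hJ.1
    exact ⟨m - 2, J, hJs, a6 J (by omega) (by omega), hJ⟩
  have hle : Nat.find hex ≤ m - 2 := by
    obtain ⟨l, r, a1, a2, a3, a4, a5, a6⟩ :=
      reach_all m σ s hmap htrans hs1 hsm hs2 hs3 hs (m - 2) (by omega)
    have := hJ.1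
    exact Nat.find_min' hex ⟨J, hJs, a6 J (by omega) (by omega), hJ⟩
  obtain ⟨k, hks, hkr, hke⟩ := Nat.find_spec hex
  have hmin : ∀ i < Nat.find hex, ¬ ReachN m σ s i k := fun i hi h =>
    Nat.find_min hex hi ⟨k, hks, h, hke⟩
  generalize Nat.find hex = n at *
  have key : ∃ K : ℕ → ℕ, K 0 = s ∧ K (m - 2) = k ∧
      (∀ i < m - 2, EdgeRel m σ (K i) (K (i + 1))) ∧ ∀ i < m - 2, K i ≠ k := by
    generalize m - 2 = N at *
    induction N, hle using Nat.le_induction with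
    | base =>
      obtain ⟨K, k0, kn, ke, kr⟩ := reach_path m σ s n k hkr
      refine ⟨K, k0, kn, ke, ?_⟩
      intro i hi h
      exact hmin i hi (h ▸ kr i hi.le)
    | succ N hN ih =>
      obtain ⟨K, k0, kn, ke, kr⟩ := ih
      refine ⟨fun i => if i = 0 then s else K (i - 1), by simp, by simp [kn], ?_, ?_⟩
      · intro i hi
        rcases i with _ | i
        · simp [k0, hs]
        · simpa using ke i (by omega)
      · intro i hi
        rcases i with _ | i
        · simpa using hks.symm
        · simpa using kr i (by omega)
  obtain ⟨K, k0, kn, ke, kr⟩ := key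
  exact ⟨K, k0, ke, by rw [kn]; exact hke, by rw [kn]; exact kr⟩

/-- One-step interval pull-back, ordered version. -/
lemma pull_le (g : ℝ → ℝ) (u v c d : ℝ) (huv : u ≤ v) (hg : ContinuousOn g (Set.Icc u v))
    (hcd : c ≤ d) (h1 : g u ≤ c) (h2 : d ≤ g v) :
    ∃ u' v', u ≤ u' ∧ u' ≤ v' ∧ v' ≤ v ∧ g u' = c ∧ g v' = d ∧
      ∀ t ∈ Set.Icc u' v', g t ∈ Set.Icc c d := by
  -- first hit of d
  have hS : IsCompact (Set.Icc u v ∩ g ⁻¹' {d}) :=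
    isCompact_Icc.of_isClosed_subset
      (hg.preimage_isClosed_of_isClosed isClosed_Icc isClosed_singleton) Set.inter_subset_left
  have hSn : (Set.Icc u v ∩ g ⁻¹' {d}).Nonempty := by
    obtain ⟨t, ht, e⟩ := intermediate_value_Icc huv hg (⟨h1.trans hcd, h2⟩ : d ∈ Set.Icc (g u) (g v))
    exact ⟨t, ht, e⟩
  obtain ⟨v', ⟨hv', ev'⟩, hv'min⟩ := hS.exists_isLeast hSn
  have ev : g v' = d := ev'
  have hg2 : ContinuousOn g (Set.Icc u v') := hg.mono (Set.Icc_subset_Icc le_rfl hv'.2)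
  have hT : IsCompact (Set.Icc u v' ∩ g ⁻¹' {c}) :=
    isCompact_Icc.of_isClosed_subset
      (hg2.preimage_isClosed_of_isClosed isClosed_Icc isClosed_singleton) Set.inter_subset_left
  have hTn : (Set.Icc u v' ∩ g ⁻¹' {c}).Nonempty := by
    obtain ⟨t, ht, e⟩ := intermediate_value_Icc hv'.1 hg2
      (⟨h1, by rw [ev]; exact hcd⟩ : c ∈ Set.Icc (g u) (g v'))
    exact ⟨t, ht, e⟩
  obtain ⟨u', ⟨hu', eu'⟩, hu'max⟩ := hT.exists_isGreatest hTn
  have eu : g u' = c := eu'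
  refine ⟨u', v', hu'.1, hu'.2, hv'.2, eu, ev, ?_⟩
  intro t ht
  constructor
  · by_contra hlt
    push Not at hlt
    obtain ⟨w, hw, e⟩ := intermediate_value_Icc ht.2
      (hg2.mono (Set.Icc_subset_Icc (hu'.1.trans ht.1) le_rfl))
      (⟨hlt.le, by rw [ev]; exact hcd⟩ : c ∈ Set.Icc (g t) (g v'))
    have hwu : w ≤ u' := hu'max ⟨⟨(hu'.1.trans ht.1).trans hw.1, hw.2⟩, e⟩
    have : t = u' := le_antisymm (hw.1.trans hwu) ht.1
    rw [this, eu] at hlt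
    exact lt_irrefl _ hlt
  · by_contra hlt
    push Not at hlt
    obtain ⟨w, hw, e⟩ := intermediate_value_Icc ht.1
      (hg2.mono (Set.Icc_subset_Icc hu'.1 ht.2))
      (⟨by rw [eu]; exact hcd, hlt.le⟩ : d ∈ Set.Icc (g u') (g t))
    have hwv : v' ≤ w := hv'min ⟨⟨hu'.1.trans hw.1, hw.2.trans (ht.2.trans hv'.2)⟩, e⟩
    have : t = v' := le_antisymm ht.2 (hwv.trans hw.2)
    rw [this, ev] at hlt
    exact lt_irrefl _ hlt

/-- One-step interval pull-back, unordered version. -/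
lemma pull (g : ℝ → ℝ) (u v c d : ℝ) (hg : ContinuousOn g (Set.uIcc u v))
    (hcd : c ≤ d) (h1 : g u ≤ c) (h2 : d ≤ g v) :
    ∃ u' v', Set.uIcc u' v' ⊆ Set.uIcc u v ∧ g u' = c ∧ g v' = d ∧
      ∀ t ∈ Set.uIcc u' v', g t ∈ Set.Icc c d := by
  rcases le_total u v with h | h
  · rw [Set.uIcc_of_le h] at hg ⊢
    obtain ⟨u', v', a1, a2, a3, a4, a5, a6⟩ := pull_le g u v c d h hg hcd h1 h2
    refine ⟨u', v', ?_, a4, a5, ?_⟩ <;> rw [Set.uIcc_of_le a2]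
    · exact Set.Icc_subset_Icc a1 a3
    · exact a6
  · rw [Set.uIcc_of_ge h] at hg ⊢
    have hg' : ContinuousOn (fun t => g (-t)) (Set.Icc (-u) (-v)) := by
      refine hg.comp continuous_neg.continuousOn ?_
      intro t ht
      exact ⟨by linarith [ht.2], by linarith [ht.1]⟩
    obtain ⟨u', v', a1, a2, a3, a4, a5, a6⟩ := pull_le (fun t => g (-t)) (-u) (-v) c d
      (by linarith) hg' hcd (by simpa using h1) (by simpa using h2)
    refine ⟨-u', -v', ?_, a4, a5, ?_⟩ <;> rw [Set.uIcc_of_ge (by linarith)]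
    · exact Set.Icc_subset_Icc (by linarith) (by linarith)
    · intro t ht
      have := a6 (-t) ⟨by linarith [ht.2], by linarith [ht.1]⟩
      simpa using this

/-- `[c,d]` is covered by the image hull of the endpoints. -/
def CovRel (f : ℝ → ℝ) (u v c d : ℝ) : Prop := (f u ≤ c ∧ d ≤ f v) ∨ (f v ≤ c ∧ d ≤ f u)

lemma itinerary (a b : ℝ) (f : ℝ → ℝ) (hcont : ContinuousOn f (Set.Icc a b))
    (hmaps : Set.MapsTo f (Set.Icc a b) (Set.Icc a b)) (L R : ℕ → ℝ)
    (hLR : ∀ i, L i ≤ R i) (hL : Set.Icc (L 0) (R 0) ⊆ Set.Icc a b) (n : ℕ)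
    (hcov : ∀ i < n, CovRel f (L i) (R i) (L (i + 1)) (R (i + 1))) :
    ∃ u v, Set.uIcc u v ⊆ Set.Icc a b ∧ f^[n] u = L n ∧ f^[n] v = R n ∧
      ∀ i ≤ n, ∀ t ∈ Set.uIcc u v, f^[i] t ∈ Set.Icc (L i) (R i) := by
  induction n with
  | zero =>
    refine ⟨L 0, R 0, ?_, rfl, rfl, ?_⟩
    · rw [Set.uIcc_of_le (hLR 0)]; exact hL
    · intro i hi t ht
      obtain rfl : i = 0 := by omega
      rw [Set.uIcc_of_le (hLR 0)] at ht
      exact ht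
  | succ n ih =>
    obtain ⟨u, v, h1, h2, h3, h4⟩ := ih (fun i hi => hcov i (by omega))
    have hc : ContinuousOn (f^[n + 1]) (Set.uIcc u v) := (hcont.iterate hmaps (n + 1)).mono h1
    have fin : ∀ u₁ v₁, Set.uIcc u₁ v₁ = Set.uIcc u v → f^[n + 1] u₁ ≤ L (n + 1) →
        R (n + 1) ≤ f^[n + 1] v₁ → ∃ u v, Set.uIcc u v ⊆ Set.Icc a b ∧ f^[n + 1] u = L (n + 1) ∧
        f^[n + 1] v = R (n + 1) ∧
        ∀ i ≤ n + 1, ∀ t ∈ Set.uIcc u v, f^[i] t ∈ Set.Icc (L i) (R i) := by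
      intro u₁ v₁ e e1 e2
      obtain ⟨u', v', b1, b2, b3, b4⟩ := pull (f^[n + 1]) u₁ v₁ _ _ (by rw [e]; exact hc)
        (hLR (n + 1)) e1 e2
      rw [e] at b1
      refine ⟨u', v', b1.trans h1, b2, b3, ?_⟩
      intro i hi t ht
      by_cases hin : i ≤ n
      · exact h4 i hin t (b1 ht)
      · obtain rfl : i = n + 1 := by omega
        exact b4 t ht
    rcases hcov n (by omega) with ⟨c1, c2⟩ | ⟨c1, c2⟩
    · exact fin u v rfl (by rw [Function.iterate_succ_apply', h2]; exact c1)
        (by rw [Function.iterate_succ_apply', h3]; exact c2)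
    · exact fin v u (Set.uIcc_comm v u) (by rw [Function.iterate_succ_apply', h3]; exact c1)
        (by rw [Function.iterate_succ_apply', h2]; exact c2)

lemma loop_point (a b : ℝ) (f : ℝ → ℝ) (hcont : ContinuousOn f (Set.Icc a b))
    (hmaps : Set.MapsTo f (Set.Icc a b) (Set.Icc a b)) (L R : ℕ → ℝ)
    (hLR : ∀ i, L i ≤ R i) (hL : Set.Icc (L 0) (R 0) ⊆ Set.Icc a b) (n : ℕ)
    (hcov : ∀ i < n, CovRel f (L i) (R i) (L (i + 1)) (R (i + 1)))
    (hn : L n = L 0 ∧ R n = R 0) :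
    ∃ y ∈ Set.Icc a b, f^[n] y = y ∧ ∀ i ≤ n, f^[i] y ∈ Set.Icc (L i) (R i) := by
  obtain ⟨u, v, h1, h2, h3, h4⟩ := itinerary a b f hcont hmaps L R hLR hL n hcov
  have hc : ContinuousOn (fun t => f^[n] t - t) (Set.uIcc u v) :=
    ((hcont.iterate hmaps n).mono h1).sub continuousOn_id
  have hu := h4 0 (by omega) u Set.left_mem_uIcc
  have hv := h4 0 (by omega) v Set.right_mem_uIcc
  simp only [Function.iterate_zero, id] at hu hv
  obtain ⟨y, hy, e⟩ := intermediate_value_uIcc hc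
    (show (0 : ℝ) ∈ Set.uIcc (f^[n] u - u) (f^[n] v - v) by
      rw [h2, h3, hn.1, hn.2]
      exact Set.mem_uIcc_of_le (by linarith [hu.1]) (by linarith [hv.2]))
  exact ⟨y, h1 hy, by simp only at e; linarith, fun i hi => h4 i hi y hy⟩

theorem non_swapping_even_orbit_gives_odd_period (a b : ℝ) (hab : a ≤ b) (f : ℝ → ℝ)
    (hcont : ContinuousOn f (Set.Icc a b))
    (hmaps : Set.MapsTo f (Set.Icc a b) (Set.Icc a b))
    (m : ℕ) (hm : 4 ≤ m) (hme : Even m)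
    (p : ℝ) (hp : p ∈ Set.Icc a b) (hper : PeriodPt f m p)
    (x : ℕ → ℝ) (hmono : ∀ i : ℕ, 1 ≤ i → i < m → x i < x (i + 1))
    (horb : {y | ∃ i : ℕ, 1 ≤ i ∧ i ≤ m ∧ y = x i} = {y | ∃ i < m, y = f^[i] p})
    (hswap : ¬ (f '' {y | ∃ i : ℕ, 1 ≤ i ∧ i ≤ m / 2 ∧ y = x i} =
          {y | ∃ i : ℕ, m / 2 < i ∧ i ≤ m ∧ y = x i} ∧
        f '' {y | ∃ i : ℕ, m / 2 < i ∧ i ≤ m ∧ y = x i} =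
          {y | ∃ i : ℕ, 1 ≤ i ∧ i ≤ m / 2 ∧ y = x i})) :
    ∃ y ∈ Set.Icc a b, PeriodPt f (m - 1) y := by
  -- strict monotonicity
  have hlt : ∀ i j, 1 ≤ i → i < j → j ≤ m → x i < x j := by
    intro i j hi hij hj
    induction j, hij using Nat.le_induction with
    | base => exact hmono i hi (by omega)
    | succ n hn ih => exact (ih (by omega)).trans (hmono n (by omega) (by omega))
  have hle : ∀ i j, 1 ≤ i → i ≤ j → j ≤ m → x i ≤ x j := by
    intro i j hi hij hj
    rcases hij.eq_or_lt with rfl | h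
    · exact le_rfl
    · exact (hlt i j hi h hj).le
  have hinjx : ∀ i j, 1 ≤ i → i ≤ m → 1 ≤ j → j ≤ m → x i = x j → i = j := by
    intro i j hi hi' hj hj' e
    rcases lt_trichotomy i j with h | h | h
    · exact absurd e (hlt i j hi h hj').ne
    · exact h
    · exact absurd e.symm (hlt j i hj h hi').ne
  have hxo : ∀ i, 1 ≤ i → i ≤ m → ∃ k < m, x i = f^[k] p := by
    intro i h1 h2
    have : x i ∈ {y | ∃ i < m, y = f^[i] p} := by rw [← horb]; exact ⟨i, h1, h2, rfl⟩
    exact this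
  have hpm : ∀ q k, f^[m * q + k] p = f^[k] p := by
    intro q k
    rw [Nat.add_comm, Function.iterate_add_apply]
    congr 1
    have : Function.IsPeriodicPt f m p := hper.1
    exact this.mul_const q
  have hox : ∀ k, ∃ i, 1 ≤ i ∧ i ≤ m ∧ f^[k] p = x i := by
    intro k
    have : f^[k % m] p ∈ {y | ∃ i : ℕ, 1 ≤ i ∧ i ≤ m ∧ y = x i} := by
      rw [horb]; exact ⟨k % m, Nat.mod_lt _ (by omega), rfl⟩
    rw [← hpm (k / m) (k % m), Nat.div_add_mod] at this
    exact this
  have hσ : ∀ i, ∃ j, 1 ≤ i → i ≤ m → (1 ≤ j ∧ j ≤ m) ∧ f (x i) = x j := by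
    intro i
    by_cases h : 1 ≤ i ∧ i ≤ m
    · obtain ⟨k, hk, e⟩ := hxo i h.1 h.2
      obtain ⟨j, j1, j2, j3⟩ := hox (k + 1)
      refine ⟨j, fun _ _ => ⟨⟨j1, j2⟩, ?_⟩⟩
      rw [e, ← j3, Function.iterate_succ_apply']
    · exact ⟨0, fun h1 h2 => absurd ⟨h1, h2⟩ h⟩
  choose σ hσ using hσ
  have hmap : ∀ i, 1 ≤ i → i ≤ m → 1 ≤ σ i ∧ σ i ≤ m := fun i h1 h2 => (hσ i h1 h2).1
  have hfx : ∀ i, 1 ≤ i → i ≤ m → f (x i) = x (σ i) := fun i h1 h2 => (hσ i h1 h2).2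
  have hit : ∀ n i, 1 ≤ i → i ≤ m → (1 ≤ σ^[n] i ∧ σ^[n] i ≤ m) ∧ f^[n] (x i) = x (σ^[n] i) := by
    intro n i h1 h2
    induction n with
    | zero => exact ⟨⟨h1, h2⟩, rfl⟩
    | succ n ih =>
      rw [Function.iterate_succ_apply', Function.iterate_succ_apply', ih.2]
      exact ⟨hmap _ ih.1.1 ih.1.2, hfx _ ih.1.1 ih.1.2⟩
  have htrans : ∀ i j, 1 ≤ i → i ≤ m → 1 ≤ j → j ≤ m → ∃ n, σ^[n] i = j := by
    intro i j hi hi' hj hj'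
    obtain ⟨k, hk, ek⟩ := hxo i hi hi'
    obtain ⟨l, hl, el⟩ := hxo j hj hj'
    refine ⟨l + (m - k), ?_⟩
    have h := hit (l + (m - k)) i hi hi'
    apply hinjx _ _ h.1.1 h.1.2 hj hj'
    rw [← h.2, ek, el, ← Function.iterate_add_apply]
    rw [show l + (m - k) + k = m * 1 + l by omega, hpm]
  have hnotper : ∀ i, 1 ≤ i → i ≤ m → f^[m - 1] (x i) ≠ x i := by
    intro i hi hi' h
    obtain ⟨k, hk, ek⟩ := hxo i hi hi'
    apply hper.2 (m - 1) (by omega) (by omega)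
    have h2 := congrArg (f^[m - k]) h
    rw [ek, ← Function.iterate_add_apply, ← Function.iterate_add_apply,
      ← Function.iterate_add_apply] at h2
    rw [show m - k + (m - 1) + k = m * 1 + (m - 1) by omega, hpm,
      show m - k + k = m by omega, hper.1] at h2
    exact h2
  have hnofix : ∀ i, 1 ≤ i → i ≤ m → σ i ≠ i := by
    intro i hi hi' h
    have hall : ∀ n, σ^[n] i = i := fun n => Function.iterate_fixed h n
    obtain ⟨n1, h1⟩ := htrans i 1 hi hi' le_rfl (by omega)
    obtain ⟨n2, h2⟩ := htrans i 2 hi hi' (by omega) (by omega)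
    rw [hall] at h1 h2
    omega
  have hsurj : ∀ j, 1 ≤ j → j ≤ m → ∃ i, 1 ≤ i ∧ i ≤ m ∧ σ i = j := by
    intro j hj hj'
    obtain ⟨n, hn⟩ := htrans (σ j) j (hmap j hj hj').1 (hmap j hj hj').2 hj hj'
    rw [← Function.iterate_succ_apply, Function.iterate_succ_apply'] at hn
    have := (hit n j hj hj').1
    exact ⟨_, this.1, this.2, hn⟩
  have hinjσ : Set.InjOn σ (Finset.Icc 1 m : Finset ℕ) := by
    apply Finset.injOn_of_surjOn_of_card_le (t := Finset.Icc 1 m) σ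
    · intro i hi
      simp only [Finset.coe_Icc, Set.mem_Icc] at hi ⊢
      exact hmap i hi.1 hi.2
    · intro j hj
      simp only [Finset.coe_Icc, Set.mem_Icc] at hj
      obtain ⟨i, h1, h2, h3⟩ := hsurj j hj.1 hj.2
      exact ⟨i, by simp [h1, h2], h3⟩
    · exact le_rfl
  -- the central interval
  obtain ⟨s, s1, s2, s3, s4⟩ := discrete_ivt (fun i => i < σ i) 1 m (by omega)
    (by have := hmap 1 le_rfl (by omega); have := hnofix 1 le_rfl (by omega); omega)
    (by have := hmap m (by omega) le_rfl; omega)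
  have s5 : σ (s + 1) ≤ s := by
    have := hnofix (s + 1) (by omega) (by omega)
    omega
  have hs : EdgeRel m σ s s := ⟨⟨s1, s2⟩, ⟨s1, s2⟩, Or.inr ⟨s5, s3⟩⟩
  have hJ : ∃ J, J ≠ s ∧ EdgeRel m σ J s := by
    by_cases hA : ∃ i, 1 ≤ i ∧ i ≤ s ∧ σ i ≤ s
    · obtain ⟨i, i1, i2, i3⟩ := hA
      obtain ⟨t, t1, t2, t3⟩ := crossing m σ s 1 s i s le_rfl s2.le ⟨s1, s2⟩ ⟨i1, i2⟩
        ⟨s1, le_rfl⟩ i3 s3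
      exact ⟨t, by omega, t3⟩
    by_cases hB : ∃ i, s + 1 ≤ i ∧ i ≤ m ∧ s + 1 ≤ σ i
    · obtain ⟨i, i1, i2, i3⟩ := hB
      obtain ⟨t, t1, t2, t3⟩ := crossing m σ s (s + 1) m (s + 1) i (by omega) le_rfl ⟨s1, s2⟩
        ⟨le_rfl, by omega⟩ ⟨i1, i2⟩ s5 i3
      exact ⟨t, by omega, t3⟩
    exfalso
    push Not at hA hB
    have c1 : (Finset.Icc 1 s).card ≤ (Finset.Icc (s + 1) m).card := by
      apply Finset.card_le_card_of_injOn σ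
      · intro i hi
        simp only [Finset.coe_Icc, Set.mem_Icc] at hi ⊢
        have := hA i hi.1 hi.2
        have := hmap i hi.1 (by omega)
        omega
      · apply hinjσ.mono
        intro i hi
        simp only [Finset.coe_Icc, Set.mem_Icc] at hi ⊢
        omega
    have c2 : (Finset.Icc (s + 1) m).card ≤ (Finset.Icc 1 s).card := by
      apply Finset.card_le_card_of_injOn σ
      · intro i hi
        simp only [Finset.coe_Icc, Set.mem_Icc] at hi ⊢
        have := hB i hi.1 hi.2
        have := hmap i (by omega) (by omega)
        omega
      · apply hinjσ.mono
        intro i hi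
        simp only [Finset.coe_Icc, Set.mem_Icc] at hi ⊢
        omega
    simp only [Nat.card_Icc] at c1 c2
    have hsm : m / 2 = s := by omega
    rw [hsm] at hswap
    apply hswap
    constructor
    · ext y
      constructor
      · rintro ⟨_, ⟨i, i1, i2, rfl⟩, rfl⟩
        exact ⟨σ i, hA i i1 i2, (hmap i i1 (by omega)).2, hfx i i1 (by omega)⟩
      · rintro ⟨j, j1, j2, rfl⟩
        obtain ⟨i, i1, i2, rfl⟩ := hsurj j (by omega) j2
        refine ⟨x i, ⟨i, i1, ?_, rfl⟩, hfx i i1 i2⟩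
        by_contra hcon
        have := hB i (by omega) i2
        omega
    · ext y
      constructor
      · rintro ⟨_, ⟨i, i1, i2, rfl⟩, rfl⟩
        have := hB i i1 i2
        exact ⟨σ i, (hmap i (by omega) i2).1, by omega, hfx i (by omega) i2⟩
      · rintro ⟨j, j1, j2, rfl⟩
        obtain ⟨i, i1, i2, rfl⟩ := hsurj j (by omega) (by omega)
        refine ⟨x i, ⟨i, ?_, i2, rfl⟩, hfx i i1 i2⟩
        by_contra hcon
        have := hA i i1 (by omega)
        omega
  obtain ⟨J, hJs, hJe⟩ := hJ
  obtain ⟨K, K0, Ke, Kl, Kn⟩ := main_path m (by omega) σ s hmap htrans s1 s2 s3 s5 hs J hJs hJe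
  -- the cyclic itinerary
  have hKb : ∀ i ≤ m - 2, 1 ≤ K i ∧ K i < m := by
    intro i hi
    rcases hi.eq_or_lt with rfl | h
    · exact Kl.1
    · exact (Ke i h).1
  have hedge : ∀ j k, EdgeRel m σ j k → CovRel f (x j) (x (j + 1)) (x k) (x (k + 1)) := by
    rintro j k ⟨hj, hk, h⟩
    unfold CovRel
    rw [hfx j hj.1 hj.2.le, hfx (j + 1) (by omega) hj.2]
    have e1 := hmap j hj.1 hj.2.le
    have e2 := hmap (j + 1) (by omega) hj.2
    rcases h with ⟨h1, h2⟩ | ⟨h1, h2⟩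
    · exact Or.inl ⟨hle _ _ e1.1 h1 hk.2.le, hle _ _ (by omega) h2 e2.2⟩
    · exact Or.inr ⟨hle _ _ e2.1 h1 hk.2.le, hle _ _ (by omega) h2 e1.2⟩
  have hxab : ∀ i, 1 ≤ i → i ≤ m → x i ∈ Set.Icc a b := by
    intro i hi hi'
    obtain ⟨k, hk, e⟩ := hxo i hi hi'
    rw [e]
    exact hmaps.iterate k hp
  obtain ⟨K', hK', hK's⟩ : ∃ K' : ℕ → ℕ, (∀ i ≤ m - 2, K' i = K i) ∧ ∀ i, m - 2 < i → K' i = s :=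
    ⟨fun i => if i ≤ m - 2 then K i else s, fun i hi => by simp [hi],
      fun i hi => by simp [Nat.not_le.2 hi]⟩
  have hK'b : ∀ i, 1 ≤ K' i ∧ K' i < m := by
    intro i
    by_cases h : i ≤ m - 2
    · rw [hK' i h]; exact hKb i h
    · rw [hK's i (by omega)]; exact ⟨s1, s2⟩
  obtain ⟨y, hyab, hy, hyi⟩ := loop_point a b f hcont hmaps (fun i => x (K' i))
    (fun i => x (K' i + 1)) (fun i => (hmono _ (hK'b i).1 (hK'b i).2).le)
    (Set.Icc_subset_Icc (hxab _ (hK'b 0).1 (hK'b 0).2.le).1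
      (hxab _ (by omega) (hK'b 0).2).2) (m - 1)
    (by
      intro i hi
      apply hedge
      by_cases h : i = m - 2
      · rw [hK' i (by omega), hK's (i + 1) (by omega), h]; exact Kl
      · rw [hK' i (by omega), hK' (i + 1) (by omega)]; exact Ke i (by omega))
    (by simp only [hK's (m - 1) (by omega), hK' 0 (by omega), K0, and_self])
  refine ⟨y, hyab, hy, ?_⟩
  intro d hd hdm hdy
  -- the last point of the loop lies in two distinct basic intervals, hence in the orbit
  have hw : f^[m - 2] y = f^[m - 2 - d] y := by
    conv_lhs => rw [show m - 2 = m - 2 - d + d by omega, Function.iterate_add_apply, hdy]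
  have m1 := hyi (m - 2) (by omega)
  have m2 := hyi (m - 2 - d) (by omega)
  simp only [hK' (m - 2) le_rfl, hK' (m - 2 - d) (by omega)] at m1 m2
  rw [← hw] at m2
  have hne := Kn (m - 2 - d) (by omega)
  have b1 := hKb (m - 2) le_rfl
  have b2 := hKb (m - 2 - d) (by omega)
  have hmem : ∃ i, 1 ≤ i ∧ i ≤ m ∧ f^[m - 2] y = x i := by
    rcases lt_or_gt_of_ne hne with h | h
    · refine ⟨K (m - 2), b1.1, b1.2.le, le_antisymm ?_ m1.1⟩
      exact m2.2.trans (hle _ _ (by omega) h b1.2.le)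
    · refine ⟨K (m - 2 - d), b2.1, b2.2.le, le_antisymm ?_ m2.1⟩
      exact m1.2.trans (hle _ _ (by omega) h b2.2.le)
  obtain ⟨i, i1, i2, i3⟩ := hmem
  have hyx : y = x (σ i) := by
    rw [← hfx i i1 i2, ← i3, ← Function.iterate_succ_apply' f,
      show (m - 2).succ = m - 1 by omega, hy]
  have hb := hmap i i1 i2
  exact hnotper (σ i) hb.1 hb.2 (by rw [← hyx]; exact hy)
end

section
/- Let n ≥ 2 and suppose the continuous map f : I → I has a period-2^n point. Then there exists ε > 0 such that every continuous map g : I → I with sup_{x ∈ I} |g(x) − f(x)| < ε has a period-2^{n−1} point. -/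
/-- If `g s - s` is nonzero on `[t,u]` and `g u > u`, then `g s > s` on `[t,u]`. -/
lemma above_of_no_fixed {t u : ℝ} {g : ℝ → ℝ} (hc : ContinuousOn g (Set.Icc t u))
    (hu : u < g u) (hne : ∀ s ∈ Set.Icc t u, g s ≠ s) : ∀ s ∈ Set.Icc t u, s < g s := by
  intro s hs
  by_contra! hlt
  have hsub : Set.Icc s u ⊆ Set.Icc t u := Set.Icc_subset_Icc_left hs.1
  have hc' : ContinuousOn (fun y => g y - y) (Set.Icc s u) := (hc.mono hsub).sub continuousOn_id
  obtain ⟨r, hr, hr0⟩ := intermediate_value_Icc hs.2 hc'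
    (show (0:ℝ) ∈ Set.Icc (g s - s) (g u - u) from ⟨by linarith, by linarith⟩)
  exact hne r (hsub hr) (by simpa [sub_eq_zero] using hr0)

lemma exists_period_two {a b : ℝ} {g : ℝ → ℝ} (hc : ContinuousOn g (Set.Icc a b))
    (hm : Set.MapsTo g (Set.Icc a b) (Set.Icc a b)) {u : ℝ} (hu : u ∈ Set.Icc a b)
    (h1 : u < g u) (h2 : g (g u) < u) : ∃ s ∈ Set.Icc a b, g (g s) = s ∧ g s ≠ s := by
  have hc2 : ContinuousOn (fun y => g (g y)) (Set.Icc a b) := hc.comp hc hm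
  -- it suffices to find a suitable left end point
  suffices H : ∃ t ∈ Set.Icc a u, t ≤ g (g t) ∧ ∀ s ∈ Set.Icc t u, g s ≠ s by
    obtain ⟨t, ht, htt, hne⟩ := H
    have hsub : Set.Icc t u ⊆ Set.Icc a b := Set.Icc_subset_Icc ht.1 hu.2
    have hc' : ContinuousOn (fun y => g (g y) - y) (Set.Icc t u) :=
      (hc2.mono hsub).sub continuousOn_id
    obtain ⟨r, hr, hr0⟩ := intermediate_value_Icc' ht.2 hc'
      (show (0:ℝ) ∈ Set.Icc (g (g u) - u) (g (g t) - t) from ⟨by linarith, by linarith⟩)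
    exact ⟨r, hsub hr, by simpa [sub_eq_zero] using hr0, hne r hr⟩
  have hgu := hm hu
  -- a fixed point above u
  obtain ⟨z, hz, hzz⟩ : ∃ z ∈ Set.Icc u (g u), g z = z := by
    have hsub : Set.Icc u (g u) ⊆ Set.Icc a b := Set.Icc_subset_Icc hu.1 hgu.2
    have hc' : ContinuousOn (fun y => g y - y) (Set.Icc u (g u)) :=
      (hc.mono hsub).sub continuousOn_id
    obtain ⟨r, hr, hr0⟩ := intermediate_value_Icc' h1.le hc'
      (show (0:ℝ) ∈ Set.Icc (g (g u) - g u) (g u - u) from ⟨by linarith, by linarith⟩)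
    exact ⟨r, hr, by simpa [sub_eq_zero] using hr0⟩
  have hzu : u < z := by
    rcases hz.1.eq_or_lt with h | h
    · subst h; linarith
    · exact h
  have hsubu : Set.Icc a u ⊆ Set.Icc a b := Set.Icc_subset_Icc_right hu.2
  have hcu : ContinuousOn (fun y => g y - y) (Set.Icc a u) := (hc.mono hsubu).sub continuousOn_id
  have hcl : IsClosed (Set.Icc a u ∩ (fun y => g y - y) ⁻¹' {0}) :=
    hcu.preimage_isClosed_of_isClosed isClosed_Icc isClosed_singleton
  have hcpt : IsCompact (Set.Icc a u ∩ (fun y => g y - y) ⁻¹' {0}) :=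
    isCompact_Icc.of_isClosed_subset hcl Set.inter_subset_left
  rcases (Set.Icc a u ∩ (fun y => g y - y) ⁻¹' {0}).eq_empty_or_nonempty with he | hne
  · have haI : a ∈ Set.Icc a b := ⟨le_rfl, hu.1.trans hu.2⟩
    refine ⟨a, ⟨le_rfl, hu.1⟩, (hm (hm haI)).1, fun s hs hfix => ?_⟩
    have : s ∈ (Set.Icc a u ∩ (fun y => g y - y) ⁻¹' {0}) := ⟨hs, by simp [hfix]⟩
    simp [he] at this
  · obtain ⟨w, ⟨hw, hw0⟩, hmax⟩ := hcpt.exists_isGreatest hne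
    have hgw : g w = w := by simpa [sub_eq_zero] using hw0
    obtain ⟨t, ht, hgt⟩ := intermediate_value_Icc hw.2
      (hc.mono (Set.Icc_subset_Icc hw.1 hu.2))
      (show z ∈ Set.Icc (g w) (g u) from ⟨by linarith [hw.2], hz.2⟩)
    have hwt : w < t := by
      rcases ht.1.eq_or_lt with h | h
      · subst h; linarith [hw.2]
      · exact h
    refine ⟨t, ⟨hw.1.trans ht.1, ht.2⟩, by rw [hgt, hzz]; linarith [ht.2], fun s hs hfix => ?_⟩
    have := hmax (show s ∈ (Set.Icc a u ∩ (fun y => g y - y) ⁻¹' {0}) from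
      ⟨⟨hw.1.trans (ht.1.trans hs.1), hs.2⟩, by simp [hfix]⟩)
    linarith [hs.1]

/-- A 4-cycle (with `p` minimal) gives a point jumping up and then below itself. -/
lemma cycle_four_min {a b : ℝ} {F : ℝ → ℝ} (hc : ContinuousOn F (Set.Icc a b))
    {p q r s : ℝ} (hp : p ∈ Set.Icc a b) (hq : q ∈ Set.Icc a b) (hr : r ∈ Set.Icc a b)
    (hs : s ∈ Set.Icc a b) (hpq : F p = q) (hqr : F q = r) (hrs : F r = s) (hsp : F s = p)
    (h1 : p < q) (h2 : p < r) (h3 : p < s) (hne1 : r ≠ s) (hne2 : q ≠ s) :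
    ∃ u ∈ Set.Icc a b, u < F u ∧ F (F u) < u := by
  rcases lt_or_gt_of_ne hne1 with h | h
  · exact ⟨r, hr, by rwa [hrs], by rwa [hrs, hsp]⟩
  rcases lt_or_gt_of_ne hne2 with h' | h'
  · obtain ⟨u, hu, hFu⟩ := intermediate_value_Icc h1.le
      (hc.mono (Set.Icc_subset_Icc hp.1 hq.2))
      (show s ∈ Set.Icc (F p) (F q) from ⟨by linarith, by linarith⟩)
    refine ⟨u, ⟨hp.1.trans hu.1, hu.2.trans hq.2⟩, by linarith [hu.2], ?_⟩
    rw [hFu, hsp]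
    refine lt_of_le_of_ne hu.1 ?_
    rintro rfl
    exact hne2 (hpq.symm.trans hFu)
  · obtain ⟨u, hu, hFu⟩ := intermediate_value_Icc' h3.le
      (hc.mono (Set.Icc_subset_Icc hp.1 hs.2))
      (show s ∈ Set.Icc (F s) (F p) from ⟨by linarith, by linarith⟩)
    refine ⟨u, ⟨hp.1.trans hu.1, hu.2.trans hs.2⟩, ?_, ?_⟩
    · rw [hFu]
      refine lt_of_le_of_ne hu.2 ?_
      rintro rfl
      linarith
    · rw [hFu, hsp]
      refine lt_of_le_of_ne hu.1 ?_
      rintro rfl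
      exact hne2 (hpq.symm.trans hFu)

lemma cycle_four {a b : ℝ} {F : ℝ → ℝ} (hc : ContinuousOn F (Set.Icc a b))
    {p q r s : ℝ} (hp : p ∈ Set.Icc a b) (hq : q ∈ Set.Icc a b) (hr : r ∈ Set.Icc a b)
    (hs : s ∈ Set.Icc a b) (hpq : F p = q) (hqr : F q = r) (hrs : F r = s) (hsp : F s = p)
    (h1 : p ≠ q) (h2 : p ≠ r) (h3 : p ≠ s) (h4 : q ≠ r) (h5 : q ≠ s) (h6 : r ≠ s) :
    ∃ u ∈ Set.Icc a b, u < F u ∧ F (F u) < u := by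
  have : (p < q ∧ p < r ∧ p < s) ∨ (q < r ∧ q < s ∧ q < p) ∨ (r < s ∧ r < p ∧ r < q) ∨
      (s < p ∧ s < q ∧ s < r) := by
    grind
  rcases this with ⟨i, j, k⟩ | ⟨i, j, k⟩ | ⟨i, j, k⟩ | ⟨i, j, k⟩
  · exact cycle_four_min hc hp hq hr hs hpq hqr hrs hsp i j k h6 h5
  · exact cycle_four_min hc hq hr hs hp hqr hrs hsp hpq i j k h3.symm h2.symm
  · exact cycle_four_min hc hr hs hp hq hrs hsp hpq hqr i j k h1 h5.symm
  · exact cycle_four_min hc hs hp hq hr hsp hpq hqr hrs i j k h4 h2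

/-- Iterates depend continuously on the map. -/
lemma iterate_close {a b : ℝ} {f : ℝ → ℝ} (hc : ContinuousOn f (Set.Icc a b))
    (hm : Set.MapsTo f (Set.Icc a b) (Set.Icc a b)) {u : ℝ} (hu : u ∈ Set.Icc a b) (m : ℕ) :
    ∀ δ > (0:ℝ), ∃ ε > (0:ℝ), ∀ g : ℝ → ℝ, Set.MapsTo g (Set.Icc a b) (Set.Icc a b) →
      (∀ t ∈ Set.Icc a b, |g t - f t| < ε) → |g^[m] u - f^[m] u| < δ := by
  induction m with
  | zero => intro δ hδ; exact ⟨1, one_pos, fun g _ _ => by simpa using hδ⟩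
  | succ m ih =>
    intro δ hδ
    have hfm := hm.iterate m hu
    obtain ⟨η, hη, hcont⟩ := Metric.continuousWithinAt_iff.1 (hc _ hfm) (δ / 2) (by linarith)
    obtain ⟨ε, hε, H⟩ := ih η hη
    refine ⟨min ε (δ / 2), lt_min hε (by linarith), fun g hgm hg => ?_⟩
    have hgI := hgm.iterate m hu
    have h1 := H g hgm fun t ht => (hg t ht).trans_le (min_le_left _ _)
    have h2 := hcont hgI (by simpa [Real.dist_eq] using h1)
    have h3 := (hg _ hgI).trans_le (min_le_right _ _)
    rw [Real.dist_eq] at h2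
    rw [Function.iterate_succ_apply', Function.iterate_succ_apply']
    rw [abs_lt] at *
    constructor <;> linarith [h2.1, h2.2, h3.1, h3.2]

theorem stability_of_power_of_two_periods (a b : ℝ) (hab : a ≤ b) (f : ℝ → ℝ)
    (hcont : ContinuousOn f (Set.Icc a b))
    (hmaps : Set.MapsTo f (Set.Icc a b) (Set.Icc a b))
    (n : ℕ) (hn : 2 ≤ n)
    (x : ℝ) (hx : x ∈ Set.Icc a b) (hper : PeriodPt f (2 ^ n) x) :
    ∃ ε > (0:ℝ), ∀ g : ℝ → ℝ, ContinuousOn g (Set.Icc a b) →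
      Set.MapsTo g (Set.Icc a b) (Set.Icc a b) →
      (∀ t ∈ Set.Icc a b, |g t - f t| < ε) →
      ∃ y ∈ Set.Icc a b, PeriodPt g (2 ^ (n - 1)) y := by
  obtain ⟨k, rfl⟩ : ∃ k, n = k + 2 := ⟨n - 2, by omega⟩
  have hk : k + 2 - 1 = k + 1 := by omega
  rw [hk]
  obtain ⟨hp0, hpi⟩ := hper
  set m := 2 ^ k with hmdef
  have hmpos : 0 < m := by positivity
  have h4 : 2 ^ (k + 2) = m + m + m + m := by rw [hmdef]; ring
  have h2' : 2 ^ (k + 1) = m + m := by rw [hmdef]; ring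
  rw [h4] at hp0 hpi
  have hFm : Set.MapsTo f^[m] (Set.Icc a b) (Set.Icc a b) := hmaps.iterate m
  have hFc : ContinuousOn f^[m] (Set.Icc a b) := hcont.iterate hmaps m
  have e2 : f^[m] (f^[m] x) = f^[m + m] x := by rw [Function.iterate_add_apply]
  have e3 : f^[m] (f^[m] (f^[m] x)) = f^[m + m + m] x := by
    simp only [Function.iterate_add_apply]
  have e4 : f^[m] (f^[m] (f^[m] (f^[m] x))) = x := by
    rw [← hp0]; simp only [Function.iterate_add_apply] at hp0 ⊢; simp only [hp0]
  have n1 : f^[m] x ≠ x := hpi m hmpos (by omega)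
  have n2 : f^[m] (f^[m] x) ≠ x := by rw [e2]; exact hpi _ (by omega) (by omega)
  have n3 : f^[m] (f^[m] (f^[m] x)) ≠ x := by rw [e3]; exact hpi _ (by omega) (by omega)
  obtain ⟨u, hu, hu1, hu2⟩ := cycle_four hFc hx (hFm hx) (hFm (hFm hx)) (hFm (hFm (hFm hx)))
    rfl rfl rfl e4 n1.symm n2.symm n3.symm
    (fun h => n3 (by rw [← h] at e4; rw [← h] at e4; grind))
    (fun h => n2 (by grind)) (fun h => n1 (by grind))
  have hu2' : f^[m + m] u < u := by rwa [Function.iterate_add_apply]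
  obtain ⟨ε₁, hε₁, H₁⟩ := iterate_close hcont hmaps hu m (f^[m] u - u) (by linarith)
  obtain ⟨ε₂, hε₂, H₂⟩ := iterate_close hcont hmaps hu (m + m) (u - f^[m + m] u) (by linarith)
  refine ⟨min ε₁ ε₂, lt_min hε₁ hε₂, fun g hgc hgm hg => ?_⟩
  have k1 := H₁ g hgm fun t ht => (hg t ht).trans_le (min_le_left _ _)
  have k2 := H₂ g hgm fun t ht => (hg t ht).trans_le (min_le_right _ _)
  rw [abs_lt] at k1 k2
  obtain ⟨y, hy, hy1, hy2⟩ := exists_period_two (hgc.iterate hgm m) (hgm.iterate m) hu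
    (by linarith [k1.1]) (by rw [← Function.iterate_add_apply]; linarith [k2.2])
  refine ⟨y, hy, ?_⟩
  have hP : Function.IsPeriodicPt g (2 ^ (k + 1)) y := by
    rw [h2']; unfold Function.IsPeriodicPt Function.IsFixedPt
    rw [Function.iterate_add_apply]; exact hy1
  have : Fact (Nat.Prime 2) := ⟨Nat.prime_two⟩
  have hmin : Function.minimalPeriod g y = 2 ^ (k + 1) :=
    Function.minimalPeriod_eq_prime_pow (fun h => hy2 h) hP
  refine ⟨hP, fun i hi hlt hi' => ?_⟩
  have := Function.IsPeriodicPt.minimalPeriod_le hi (show Function.IsPeriodicPt g i y from hi')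
  omega
end

section
/- Let m ≥ 3 be odd, let i ≥ 0 be an integer, and suppose the continuous map f : I → I has a period-(2^i·m) point. Then there exists ε > 0 such that every continuous map g : I → I with sup_{x ∈ I} |g(x) − f(x)| < ε has a period-(2^i·(m+2)) point. -/
open Function Set

/-- The first point where a continuous function becomes nonpositive. -/
lemma first_zero (k : ℝ → ℝ) (hk : Continuous k) (d w : ℝ) (hdw : d ≤ w) (hd : 0 < k d)
    (hw : k w ≤ 0) : ∃ c, d < c ∧ c ≤ w ∧ k c = 0 ∧ ∀ x, d ≤ x → x < c → 0 < k x := by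
  have hcl : IsClosed {x | x ∈ Icc d w ∧ k x ≤ 0} :=
    isClosed_Icc.inter (isClosed_le hk continuous_const)
  have hbd : BddBelow {x | x ∈ Icc d w ∧ k x ≤ 0} := ⟨d, fun x hx => hx.1.1⟩
  have hne : {x | x ∈ Icc d w ∧ k x ≤ 0}.Nonempty := ⟨w, ⟨hdw, le_rfl⟩, hw⟩
  have hmem := hcl.csInf_mem hne hbd
  set c := sInf {x | x ∈ Icc d w ∧ k x ≤ 0} with hc
  obtain ⟨⟨h1, h2⟩, h3⟩ := hmem
  have hlt : ∀ x, d ≤ x → x < c → 0 < k x := by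
    intro x hx hxc
    by_contra hcon
    have : c ≤ x := csInf_le hbd ⟨⟨hx, by linarith⟩, by linarith⟩
    linarith
  have hdc : d < c := by
    rcases h1.lt_or_eq with h | h
    · exact h
    · rw [← h] at h3; linarith
  refine ⟨c, hdc, h2, ?_, hlt⟩
  obtain ⟨y, hy, hy0⟩ := intermediate_value_Icc' h1 hk.continuousOn ⟨h3, hd.le⟩
  rcases hy.2.lt_or_eq with h | h
  · have := hlt y hy.1 h; linarith
  · rw [← h]; exact hy0

/-- The last point where a continuous function is nonnegative. -/
lemma last_zero (k : ℝ → ℝ) (hk : Continuous k) (u v : ℝ) (huv : u ≤ v) (hu : 0 ≤ k u)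
    (hv : k v < 0) : ∃ c, u ≤ c ∧ c < v ∧ k c = 0 ∧ ∀ x, c < x → x ≤ v → k x < 0 := by
  obtain ⟨c, h1, h2, h3, h4⟩ := first_zero (fun x => - k (-x)) (by fun_prop) (-v) (-u)
    (by linarith) (by simpa using hv) (by simpa using hu)
  refine ⟨-c, by linarith, by linarith, by simpa using h3, fun x hx hxv => ?_⟩
  have := h4 (-x) (by linarith) (by linarith)
  simp at this; exact this

lemma exists_u (f : ℝ → ℝ) (hf : Continuous f) (a b : ℝ) (hr : ∀ x, f x ∈ Icc a b) (v : ℝ)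
    (h1 : v < f v) (h2 : f (f v) < v) :
    ∃ u, u < v ∧ f (f u) = u ∧ (∀ x, u ≤ x → x ≤ v → x < f x) ∧
      ∀ x, u < x → x ≤ v → f (f x) < x := by
  have key : ∃ u0, u0 < v ∧ (∀ x, u0 ≤ x → x ≤ v → x < f x) ∧ u0 ≤ f (f u0) := by
    by_cases hex : ∃ x, x ≤ v ∧ f x ≤ x
    · obtain ⟨x, hxv, hx⟩ := hex
      obtain ⟨w, -, hwv, hw0, hw⟩ := last_zero (fun x => x - f x) (by fun_prop) x v hxv
        (by simpa using hx) (by simpa using h1)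
      have hww : f w = w := by linarith
      have hev : ∀ᶠ t in nhds w, f t < v :=
        (hf.tendsto w).eventually_lt_const (by rw [hww]; exact hwv)
      obtain ⟨δ, hδ, hball⟩ := Metric.eventually_nhds_iff.1 hev
      set t := w + min (δ/2) ((v-w)/2) with ht
      have hp : 0 < min (δ/2) ((v-w)/2) := lt_min (by linarith) (by linarith)
      have hA : min (δ/2) ((v-w)/2) ≤ δ/2 := min_le_left _ _
      have hB : min (δ/2) ((v-w)/2) ≤ (v-w)/2 := min_le_right _ _
      have hft : f t < v := hball (by
        rw [Real.dist_eq, ht, add_sub_cancel_left, abs_of_pos hp]; linarith)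
      have hg : ∀ x, w < x → x ≤ v → x < f x := fun x hx hxv => by
        have := hw x hx hxv; linarith
      have htf := hg t (by linarith) (by linarith)
      refine ⟨t, by linarith, fun x hx hxv => hg x (by linarith) hxv, ?_⟩
      have := hg (f t) (by linarith) (by linarith)
      linarith
    · push Not at hex
      refine ⟨min a v - 1, by linarith [min_le_right a v], fun x _ hx => hex x hx, ?_⟩
      have := (hr (f (min a v - 1))).1
      linarith [min_le_left a v]
  obtain ⟨u0, hu0, hpos, hle⟩ := key
  obtain ⟨u, h3, h4, h5, h6⟩ := last_zero (fun x => f (f x) - x) (by fun_prop) u0 v hu0.le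
    (by simpa using hle) (by simpa using h2)
  refine ⟨u, h4, by linarith, fun x hx hxv => hpos x (by linarith) hxv, fun x hx hxv => ?_⟩
  have := h6 x hx hxv
  linarith

lemma iter_two (f : ℝ → ℝ) (x : ℝ) : f^[2] x = f (f x) := rfl

/-- Odd periods from an open condition. -/
lemma odd_period (f : ℝ → ℝ) (hf : Continuous f) (a b : ℝ) (hr : ∀ x, f x ∈ Icc a b) (v : ℝ)
    (h1 : v < f v) (h2 : f (f v) < v) (n : ℕ) (hn : Odd n) (hv : f^[n] v ≤ v) :
    ∃ y, minimalPeriod f y = n := by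
  obtain ⟨u, huv, hu2, hpos, hneg⟩ := exists_u f hf a b hr v h1 h2
  have hu : ∀ k, Odd k → u < f^[k] u := by
    rintro k ⟨j, rfl⟩
    have hp : IsPeriodicPt f (2 * j) u := by
      have : IsPeriodicPt f 2 u := hu2
      exact this.mul_const j
    rw [add_comm, iterate_add_apply, hp.eq]
    exact hpos u le_rfl huv.le
  have solve : ∀ k, Odd k → ∀ x, u ≤ x → f^[k] x ≤ x →
      ∃ c, u < c ∧ c ≤ x ∧ f^[k] c = c ∧ ∀ t, u ≤ t → t < c → t < f^[k] t := by
    intro k hk x hux hx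
    obtain ⟨c, q1, q2, q3, q4⟩ := first_zero (fun x => f^[k] x - x)
      ((hf.iterate k).sub continuous_id) u x hux (by have := hu k hk; simpa using this)
      (by simpa using hx)
    refine ⟨c, q1, q2, by linarith, fun t ht htc => ?_⟩
    have := q4 t ht htc; linarith
  have step : ∀ k, Odd k → ∀ c, u < c → c ≤ v → f^[k] c = c →
      ∃ c', u < c' ∧ c' < c ∧ f^[k+2] c' = c' := by
    intro k hk c huc hcv hc
    have e : f^[k+2] c = f (f c) := by
      rw [add_comm, iterate_add_apply, hc, iter_two]
    have hlt := hneg c huc hcv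
    obtain ⟨c', q1, q2, q3, -⟩ := solve (k+2) (by
      rw [Nat.odd_add]; simp [hk]) c huc.le (by rw [e]; exact hlt.le)
    refine ⟨c', q1, lt_of_le_of_ne q2 ?_, q3⟩
    rintro rfl
    rw [e] at q3; linarith
  have steps : ∀ j, ∀ k, Odd k → ∀ c, u < c → c ≤ v → f^[k] c = c →
      ∃ c', u < c' ∧ c' < c ∧ f^[k+2*(j+1)] c' = c' := by
    intro j
    induction j with
    | zero => intro k hk c q1 q2 q3; exact step k hk c q1 q2 q3
    | succ j ih =>
      intro k hk c q1 q2 q3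
      obtain ⟨c1, r1, r2, r3⟩ := ih k hk c q1 q2 q3
      obtain ⟨c2, s1, s2, s3⟩ := step _ (by
        rw [Nat.odd_add]; simp [hk]) c1 r1 (by linarith) r3
      exact ⟨c2, s1, by linarith, s3⟩
  obtain ⟨y, q1, q2, q3, q4⟩ := solve n hn v huv.le hv
  refine ⟨y, ?_⟩
  have hdvd : minimalPeriod f y ∣ n := IsPeriodicPt.minimalPeriod_dvd q3
  have hdo : Odd (minimalPeriod f y) := Odd.of_dvd_nat hn hdvd
  by_contra hne
  have hlt : minimalPeriod f y < n := lt_of_le_of_ne (Nat.le_of_dvd hn.pos hdvd) hne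
  obtain ⟨s, hs⟩ := hdo
  obtain ⟨r, hr'⟩ := hn
  obtain ⟨c', t1, t2, t3⟩ := steps (r - s - 1) (minimalPeriod f y) ⟨s, hs⟩ y q1 q2
    (isPeriodicPt_minimalPeriod f y)
  have e : minimalPeriod f y + 2 * (r - s - 1 + 1) = n := by omega
  rw [e] at t3
  have := q4 c' t1.le t2
  linarith

lemma exists_v (f : ℝ → ℝ) (hf : Continuous f) (m : ℕ) (hm : 3 ≤ m) (x : ℝ)
    (hx : minimalPeriod f x = m) :
    ∃ p v, p < v ∧ v < f v ∧ f (f v) = p ∧ f^[m] p = p ∧ (∀ k, p ≤ f^[k] p) ∧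
      ∃ j, f^[j] p = f v := by
  obtain ⟨k0, hk0, hmin⟩ := Finset.exists_min_image (Finset.range m) (fun k => f^[k] x)
    ⟨0, Finset.mem_range.2 (by omega)⟩
  have hxper : x ∈ periodicPts f := by
    rw [← minimalPeriod_pos_iff_mem_periodicPts]; omega
  set p := f^[k0] x with hp
  have hpm : minimalPeriod f p = m := by rw [hp, minimalPeriod_apply_iterate hxper, hx]
  have hpp : f^[m] p = p := by
    have := isPeriodicPt_minimalPeriod f p
    rw [hpm] at this; exact this
  have hle : ∀ k, p ≤ f^[k] p := by
    intro k
    have : f^[k] p = f^[(k + k0) % m] x := by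
      rw [hp, ← iterate_add_apply, ← hx, iterate_mod_minimalPeriod_eq]
    rw [this]
    exact hmin _ (Finset.mem_range.2 (Nat.mod_lt _ (by omega)))
  have hnp : ∀ k, 0 < k → k < m → f^[k] p ≠ p := by
    intro k hk hkm he
    exact not_isPeriodicPt_of_pos_of_lt_minimalPeriod hk.ne' (by omega) he
  set b := f^[m-1] p with hb
  have hfb : f b = p := by
    rw [hb, ← iterate_succ_apply' f, Nat.succ_eq_add_one, Nat.sub_add_cancel (by omega), hpp]
  have hpb : p < b := lt_of_le_of_ne (hle _) (hnp (m-1) (by omega) (by omega)).symm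
  classical
  have hex : ∃ j, b ≤ f^[j] p := ⟨m-1, le_rfl⟩
  obtain ⟨j, hj⟩ : ∃ j, Nat.find hex = j + 1 := by
    refine Nat.exists_eq_succ_of_ne_zero fun h0 => ?_
    have := Nat.find_spec hex
    rw [h0] at this
    simp at this; linarith
  have hj1 : b ≤ f (f^[j] p) := by
    have := Nat.find_spec hex
    rw [hj, iterate_succ_apply'] at this; exact this
  have hj2 : f^[j] p < b := not_le.1 (Nat.find_min hex (by omega))
  obtain ⟨v, hv, hvb⟩ := intermediate_value_Icc' hj2.le hf.continuousOn
    (show b ∈ Icc (f b) (f (f^[j] p)) from ⟨by rw [hfb]; exact hpb.le, hj1⟩)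
  have hvlt : v < b := by
    refine lt_of_le_of_ne hv.2 ?_
    intro h
    rw [h, hfb] at hvb; linarith
  refine ⟨p, v, ?_, by rw [hvb]; exact hvlt, by rw [hvb, hfb], hpp, hle, m-1, hvb.symm⟩
  refine lt_of_le_of_ne ((hle j).trans hv.1) ?_
  intro h
  apply hnp 2 (by omega) (by omega)
  rw [iter_two, h, hvb, hfb]; exact h

lemma even_period (f : ℝ → ℝ) (hf : Continuous f) (m : ℕ) (hm : 3 ≤ m) (hodd : Odd m) (x : ℝ)
    (hx : minimalPeriod f x = m) (n : ℕ) (hn : 0 < n) : ∃ y, minimalPeriod f y = 2 * n := by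
  obtain ⟨p, v, hpv, hvf, hffv, hpp, hle, j, hj⟩ := exists_v f hf m hm x hx
  -- a fixed point above `v`
  obtain ⟨z, hz1, hz2, hz3, -⟩ := first_zero (fun t => f t - t) (by fun_prop) v (f v) hvf.le
    (by simpa using hvf) (by simp [hffv]; linarith)
  have hzf : f z = z := by linarith
  have hzb : z < f v := by
    refine lt_of_le_of_ne hz2 ?_
    intro h
    rw [← h, hzf] at hffv; linarith
  -- the first fixed point of `f ∘ f` above `v`
  obtain ⟨z0, hz01, hz02, hz03, hz04⟩ := first_zero (fun t => t - f (f t)) (by fun_prop) v z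
    hz1.le (by simp [hffv]; linarith) (by simp [hzf])
  have hz0f : f (f z0) = z0 := by linarith
  have hv' : ∀ t, v ≤ t → t < z0 → f (f t) < z0 := fun t q1 q2 => by
    have := hz04 t q1 q2; linarith
  have hd0 : ∃ d0, p ≤ d0 ∧ d0 ≤ v ∧ z0 ≤ f (f d0) := by
    by_contra hcon
    push Not at hcon
    have inv : ∀ k, f^[2*k] p < z0 := by
      intro k
      induction k with
      | zero => simp; linarith
      | succ k ih =>
        have e : f^[2*(k+1)] p = f (f (f^[2*k] p)) := by
          rw [mul_add, add_comm, iterate_add_apply]; rfl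
        rw [e]
        rcases le_total (f^[2*k] p) v with h | h
        · exact hcon _ (hle _) h
        · exact hv' _ h ih
    have hbig : f^[j] p = f^[j+m] p := by rw [iterate_add_apply, hpp]
    rcases Nat.even_or_odd j with ⟨r, hr⟩ | hjo
    · have := inv r
      rw [show 2 * r = j by omega, hj] at this; linarith
    · obtain ⟨r, hr⟩ := hjo.add_odd hodd
      have := inv r
      rw [show 2 * r = j + m by omega, ← hbig, hj] at this; linarith
  obtain ⟨d0, hd1, hd2, hd3⟩ := hd0
  obtain ⟨d, hd4, hd5, hd6, hd7⟩ := last_zero (fun t => f (f t) - z0) (by fun_prop) d0 v hd2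
    (by simpa using hd3) (by simp [hffv]; linarith)
  have hdz : f (f d) = z0 := by linarith
  have hlow : ∀ t, d < t → t < z0 → f (f t) < z0 := by
    intro t q1 q2
    rcases le_total t v with h | h
    · have := hd7 t q1 h; linarith
    · exact hv' t h q2
  have hhigh : ∀ t, d < t → t < z0 → z < f t := by
    intro t q1 q2
    by_contra hcon
    push Not at hcon
    have : z ∈ f '' uIcc t v := by
      apply intermediate_value_uIcc hf.continuousOn
      rw [uIcc_of_le (by linarith)]
      exact ⟨hcon, hzb.le⟩
    obtain ⟨s, hs, hsz⟩ := this
    rw [mem_uIcc] at hs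
    have hs1 : d < s ∧ s < z0 := by
      rcases hs with h | h <;> constructor <;> linarith
    have := hlow s hs1.1 hs1.2
    rw [hsz, hzf] at this; linarith
  -- iterate of `h = f ∘ f`
  have hh : Continuous f^[2] := hf.iterate 2
  have hdn : ∀ k, (f^[2])^[k+1] d = z0 := by
    intro k
    induction k with
    | zero => exact hdz
    | succ k ih => rw [iterate_succ_apply', ih]; exact hz0f
  have solve : ∀ k, ∀ w, d ≤ w → (f^[2])^[k+1] w ≤ w →
      ∃ c, d < c ∧ c ≤ w ∧ (f^[2])^[k+1] c = c ∧
        ∀ t, d ≤ t → t < c → t < (f^[2])^[k+1] t := by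
    intro k w hw hw2
    obtain ⟨c, q1, q2, q3, q4⟩ := first_zero (fun t => (f^[2])^[k+1] t - t)
      ((hh.iterate (k+1)).sub continuous_id) d w hw
      (by simp only [hdn]; linarith) (by simpa using hw2)
    refine ⟨c, q1, q2, by linarith, fun t ht htc => ?_⟩
    have := q4 t ht htc; linarith
  have step : ∀ k, ∀ c, d < c → c < v → (f^[2])^[k+1] c = c →
      ∃ c', d < c' ∧ c' < c ∧ (f^[2])^[k+2] c' = c' := by
    intro k c q1 q2 q3
    obtain ⟨w, hw, hwv⟩ := intermediate_value_Icc' q1.le (hh.iterate (k+1)).continuousOn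
      (show v ∈ Icc _ _ by rw [q3, hdn]; exact ⟨q2.le, hz01.le⟩)
    have hwc : w < c := by
      refine lt_of_le_of_ne hw.2 ?_
      intro h
      rw [h, q3] at hwv; linarith
    have e : (f^[2])^[k+2] w = p := by
      rw [iterate_succ_apply', hwv]; exact hffv
    obtain ⟨c', r1, r2, r3, -⟩ := solve (k+1) w hw.1 (by
      show (f^[2])^[k+2] w ≤ w
      rw [e]; linarith [hw.1])
    exact ⟨c', r1, by linarith, r3⟩
  have steps : ∀ i, ∀ k, ∀ c, d < c → c < v → (f^[2])^[k+1] c = c →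
      ∃ c', d < c' ∧ c' < c ∧ (f^[2])^[k+1+(i+1)] c' = c' := by
    intro i
    induction i with
    | zero => exact step
    | succ i ih =>
      intro k c q1 q2 q3
      obtain ⟨c1, r1, r2, r3⟩ := ih k c q1 q2 q3
      obtain ⟨c2, s1, s2, s3⟩ := step (k+1+i) c1 r1 (by linarith) r3
      exact ⟨c2, s1, by linarith, s3⟩
  obtain ⟨N, rfl⟩ : ∃ N, n = N + 1 := ⟨n - 1, by omega⟩
  obtain ⟨c1, r1, r2, r3, -⟩ := solve 0 v hd5.le (by
    show f (f v) ≤ v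
    linarith)
  have r2' : c1 < v := by
    refine lt_of_le_of_ne r2 ?_
    rintro rfl
    have : f (f c1) = c1 := r3
    linarith
  obtain ⟨w, w1, w2, w3⟩ : ∃ w, d < w ∧ w < v ∧ (f^[2])^[N+1] w = w := by
    rcases Nat.eq_zero_or_pos N with h | h
    · subst h; exact ⟨c1, r1, r2', r3⟩
    · obtain ⟨c', s1, s2, s3⟩ := steps (N-1) 0 c1 r1 r2' r3
      rw [show 0 + 1 + (N - 1 + 1) = N + 1 by omega] at s3
      exact ⟨c', s1, by linarith, s3⟩
  obtain ⟨y, y1, y2, y3, y4⟩ := solve N w w1.le w3.le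
  have hyv : y < v := by linarith
  have below : ∀ i, i < N → y < (f^[2])^[i+1] y := by
    intro i hi
    by_contra hcon
    push Not at hcon
    obtain ⟨c, s1, s2, s3, -⟩ := solve i y y1.le hcon
    obtain ⟨c', t1, t2, t3⟩ := steps (N - i - 1) i c s1 (by linarith) s3
    rw [show i + 1 + (N - i - 1 + 1) = N + 1 by omega] at t3
    have := y4 c' t1.le (by linarith)
    linarith
  have hper : minimalPeriod f^[2] y = N + 1 := by
    have hdvd : minimalPeriod f^[2] y ∣ N + 1 := IsPeriodicPt.minimalPeriod_dvd y3
    by_contra hne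
    have hlt := lt_of_le_of_ne (Nat.le_of_dvd (by omega) hdvd) hne
    have hpos : 0 < minimalPeriod f^[2] y := Nat.pos_of_dvd_of_pos hdvd (by omega)
    have := below (minimalPeriod f^[2] y - 1) (by omega)
    rw [Nat.sub_add_cancel (by omega)] at this
    have h2 := isPeriodicPt_minimalPeriod f^[2] y
    have h3 : (f^[2])^[minimalPeriod f^[2] y] y = y := h2
    linarith
  have inside : ∀ i, i ≤ N → d < (f^[2])^[i] y ∧ (f^[2])^[i] y < z0 := by
    intro i
    induction i with
    | zero => intro _; exact ⟨y1, by simp; linarith⟩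
    | succ i ih =>
      intro hi
      have hi' := ih (by omega)
      refine ⟨by linarith [below i (by omega)], ?_⟩
      rw [iterate_succ_apply']
      exact hlow _ hi'.1 hi'.2
  have inside' : ∀ i, d < (f^[2])^[i] y ∧ (f^[2])^[i] y < z0 := by
    intro i
    have := inside (i % (N+1)) (by have := Nat.mod_lt i (show 0 < N + 1 by omega); omega)
    rwa [← hper, iterate_mod_minimalPeriod_eq] at this
  refine ⟨y, ?_⟩
  have hdiv := minimalPeriod_iterate_eq_div_gcd (f := f) (x := y) (n := 2) (by norm_num)
  rw [hper] at hdiv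
  rcases Nat.even_or_odd (minimalPeriod f y) with he | ho
  · rw [Nat.gcd_eq_right he.two_dvd] at hdiv
    have := he.two_dvd
    omega
  · exfalso
    obtain ⟨s, hs⟩ := ho
    have h1 : f^[minimalPeriod f y] y = y := isPeriodicPt_minimalPeriod f y
    rw [hs] at h1
    replace h1 : f (f^[2 * s] y) = y := (iterate_succ_apply' f (2 * s) y).symm.trans h1
    rw [iterate_mul] at h1
    have h2 := inside' s
    have := hhigh _ h2.1 h2.2
    rw [h1] at this
    linarith

lemma iter_stable (f : ℝ → ℝ) (hf : Continuous f) (v : ℝ) (k : ℕ) :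
    ∀ η > (0:ℝ), ∃ ε > (0:ℝ), ∀ g : ℝ → ℝ, (∀ t, |g t - f t| < ε) →
      |g^[k] v - f^[k] v| < η := by
  induction k with
  | zero => intro η hη; exact ⟨1, one_pos, fun g _ => by simpa using hη⟩
  | succ k ih =>
    intro η hη
    obtain ⟨δ, hδ, hcont⟩ := Metric.continuous_iff.1 hf (f^[k] v) (η/2) (by linarith)
    obtain ⟨ε, hε, h⟩ := ih δ hδ
    refine ⟨min ε (η/2), lt_min hε (by linarith), fun g hg => ?_⟩
    have h1 := h g (fun t => (hg t).trans_le (min_le_left _ _))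
    have h2 := hcont (g^[k] v) h1
    rw [Real.dist_eq] at h2
    have h3 := (hg (g^[k] v)).trans_le (min_le_right _ _)
    rw [iterate_succ_apply', iterate_succ_apply']
    rw [abs_lt] at *
    constructor <;> linarith [h2.1, h2.2, h3.1, h3.2]

lemma periodPt_iff (f : ℝ → ℝ) (m : ℕ) (hm : 0 < m) (x : ℝ) :
    PeriodPt f m x ↔ minimalPeriod f x = m := by
  constructor
  · rintro ⟨h1, h2⟩
    have hp : IsPeriodicPt f m x := h1
    have hle := hp.minimalPeriod_le hm
    have hpos := hp.minimalPeriod_pos hm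
    by_contra hne
    exact h2 _ hpos (lt_of_le_of_ne hle hne) (isPeriodicPt_minimalPeriod f x)
  · intro h
    refine ⟨?_, fun i hi him he => ?_⟩
    · have := isPeriodicPt_minimalPeriod f x
      rw [h] at this; exact this
    · exact not_isPeriodicPt_of_pos_of_lt_minimalPeriod hi.ne' (by omega) he

lemma period_lift (g : ℝ → ℝ) (hg : Continuous g) (i q : ℕ) (hq : 3 ≤ q) (hodd : Odd q) (y : ℝ)
    (hy : minimalPeriod g^[2^i] y = q) : ∃ w, minimalPeriod g w = 2^i * q := by
  have h1 := minimalPeriod_iterate_eq_div_gcd (f := g) (x := y) (n := 2^i) (by positivity)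
  rw [hy] at h1
  obtain ⟨j, hj, hgcd⟩ := (Nat.dvd_prime_pow Nat.prime_two).1
    (Nat.gcd_dvd_right (minimalPeriod g y) (2^i))
  have hN : minimalPeriod g y = 2^j * q := by
    rw [h1, ← hgcd, Nat.mul_div_cancel' (Nat.gcd_dvd_left _ _)]
  rcases hj.lt_or_eq with hlt | rfl
  · obtain ⟨l, rfl⟩ : ∃ l, i = l + 1 := ⟨i - 1, by omega⟩
    have h2 := minimalPeriod_iterate_eq_div_gcd (f := g) (x := y) (n := 2^l) (by positivity)
    have hcop : Nat.Coprime q (2^(l-j)) := (Nat.coprime_two_right.2 hodd).pow_right _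
    have hg2 : Nat.gcd (2^j * q) (2^l) = 2^j := by
      rw [show 2^l = 2^j * 2^(l-j) by rw [← pow_add]; congr 1; omega, Nat.gcd_mul_left,
        hcop.gcd_eq_one, mul_one]
    rw [hN, hg2, Nat.mul_div_cancel_left _ (by positivity)] at h2
    obtain ⟨w, hw⟩ := even_period g^[2^l] (hg.iterate _) q hq hodd y h2 q (by omega)
    refine ⟨w, ?_⟩
    have h3 := minimalPeriod_iterate_eq_div_gcd (f := g) (x := w) (n := 2^l) (by positivity)
    rw [hw] at h3
    obtain ⟨r, hr, hgcd'⟩ := (Nat.dvd_prime_pow Nat.prime_two).1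
      (Nat.gcd_dvd_right (minimalPeriod g w) (2^l))
    have hM : minimalPeriod g w = 2^r * (2 * q) := by
      rw [h3, ← hgcd', Nat.mul_div_cancel' (Nat.gcd_dvd_left _ _)]
    rcases hr.lt_or_eq with hlt' | rfl
    · exfalso
      have hd : 2^(r+1) ∣ Nat.gcd (minimalPeriod g w) (2^l) := by
        apply Nat.dvd_gcd
        · rw [hM]; exact ⟨q, by ring⟩
        · exact pow_dvd_pow 2 hlt'
      rw [hgcd'] at hd
      have := (Nat.pow_dvd_pow_iff_le_right (by norm_num : 1 < 2)).1 hd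
      omega
    · rw [hM]; ring
  · exact ⟨y, hN⟩

/-- Extension of a map of the interval to the line. -/
noncomputable def extMap (a b : ℝ) (hab : a ≤ b) (f : ℝ → ℝ) : ℝ → ℝ :=
  fun x => f (projIcc a b hab x)

lemma extMap_cont (a b : ℝ) (hab : a ≤ b) (f : ℝ → ℝ) (hf : ContinuousOn f (Icc a b)) :
    Continuous (extMap a b hab f) :=
  hf.comp_continuous (continuous_subtype_val.comp continuous_projIcc) (fun x => (projIcc a b hab x).2)

lemma extMap_range (a b : ℝ) (hab : a ≤ b) (f : ℝ → ℝ) (hf : MapsTo f (Icc a b) (Icc a b)) (x : ℝ) :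
    extMap a b hab f x ∈ Icc a b := hf (projIcc a b hab x).2

lemma extMap_iter (a b : ℝ) (hab : a ≤ b) (f : ℝ → ℝ) (hf : MapsTo f (Icc a b) (Icc a b)) (x : ℝ)
    (hx : x ∈ Icc a b) (k : ℕ) : (extMap a b hab f)^[k] x = f^[k] x := by
  induction k with
  | zero => rfl
  | succ k ih =>
    rw [iterate_succ_apply', iterate_succ_apply', ih, extMap,
      projIcc_of_mem hab (hf.iterate k hx)]

lemma extMap_period (a b : ℝ) (hab : a ≤ b) (f : ℝ → ℝ) (hf : MapsTo f (Icc a b) (Icc a b)) (x : ℝ)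
    (hx : x ∈ Icc a b) (m : ℕ) : PeriodPt (extMap a b hab f) m x ↔ PeriodPt f m x := by
  unfold PeriodPt
  simp only [extMap_iter a b hab f hf x hx]

theorem stability_of_odd_type_periods (a b : ℝ) (hab : a ≤ b) (f : ℝ → ℝ)
    (hcont : ContinuousOn f (Set.Icc a b))
    (hmaps : Set.MapsTo f (Set.Icc a b) (Set.Icc a b))
    (m : ℕ) (hm : 3 ≤ m) (hodd : Odd m) (i : ℕ)
    (x : ℝ) (hx : x ∈ Set.Icc a b) (hper : PeriodPt f (2 ^ i * m) x) :
    ∃ ε > (0:ℝ), ∀ g : ℝ → ℝ, ContinuousOn g (Set.Icc a b) →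
      Set.MapsTo g (Set.Icc a b) (Set.Icc a b) →
      (∀ t ∈ Set.Icc a b, |g t - f t| < ε) →
      ∃ y ∈ Set.Icc a b, PeriodPt g (2 ^ i * (m + 2)) y := by
  have h2i : 0 < 2 ^ i := by positivity
  have hFc := extMap_cont a b hab f hcont
  rw [← extMap_period a b hab f hmaps x hx, periodPt_iff _ _ (Nat.mul_pos h2i (by omega))] at hper
  set F := extMap a b hab f with hF
  have hφ : minimalPeriod F^[2^i] x = m := by
    rw [minimalPeriod_iterate_eq_div_gcd h2i.ne', hper, Nat.gcd_eq_right (Dvd.intro _ rfl),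
      Nat.mul_div_cancel_left _ h2i]
  obtain ⟨p, v, hpv, hvf, hffv, hpp, -, -⟩ := exists_v F^[2^i] (hFc.iterate _) m hm x hφ
  have hA : v < F^[2^i] v := hvf
  have hB : F^[2^i * 2] v < v := by
    rw [iterate_mul, iter_two, hffv]; exact hpv
  have hC : F^[2^i * (m+2)] v < v := by
    rw [iterate_mul, iterate_add_apply, iter_two, hffv, hpp]; exact hpv
  obtain ⟨ε1, e1, s1⟩ := iter_stable F hFc v (2^i) (F^[2^i] v - v) (by linarith)
  obtain ⟨ε2, e2, s2⟩ := iter_stable F hFc v (2^i*2) (v - F^[2^i*2] v) (by linarith)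
  obtain ⟨ε3, e3, s3⟩ := iter_stable F hFc v (2^i*(m+2)) (v - F^[2^i*(m+2)] v) (by linarith)
  refine ⟨min ε1 (min ε2 ε3), lt_min e1 (lt_min e2 e3), fun g hgc hgm hclose => ?_⟩
  have hGc := extMap_cont a b hab g hgc
  have hGr := extMap_range a b hab g hgm
  have hcl : ∀ t, |extMap a b hab g t - F t| < min ε1 (min ε2 ε3) :=
    fun t => hclose _ (projIcc a b hab t).2
  have hGp := extMap_period a b hab g hgm
  set G := extMap a b hab g with hG
  have k1 := abs_lt.1 (s1 G fun t => (hcl t).trans_le (min_le_left _ _))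
  have k2 := abs_lt.1 (s2 G fun t => (hcl t).trans_le ((min_le_right _ _).trans (min_le_left _ _)))
  have k3 := abs_lt.1 (s3 G fun t => (hcl t).trans_le ((min_le_right _ _).trans (min_le_right _ _)))
  have hGr' : ∀ k, 0 < k → ∀ t, G^[k] t ∈ Icc a b := by
    intro k hk t
    obtain ⟨l, rfl⟩ : ∃ l, k = l + 1 := ⟨k - 1, by omega⟩
    rw [iterate_succ_apply']; exact hGr _
  obtain ⟨y, hy⟩ := odd_period G^[2^i] (hGc.iterate _) a b (hGr' _ h2i) v (by linarith [k1.1])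
    (by
      have := k2.2
      rw [iterate_mul, iter_two] at this
      linarith) (m+2) (by rw [Nat.odd_add]; simp [hodd])
    (by
      have := k3.2
      rw [iterate_mul] at this
      linarith)
  obtain ⟨w, hw⟩ := period_lift G hGc i (m+2) (by omega) (by rw [Nat.odd_add]; simp [hodd]) y hy
  have hpos : 0 < 2^i * (m+2) := Nat.mul_pos h2i (by omega)
  have hwp := (periodPt_iff G _ hpos w).2 hw
  have hwI : w ∈ Icc a b := by
    have := hGr' _ hpos w
    rwa [hwp.1] at this
  exact ⟨w, hwI, (hGp w hwI _).1 hwp⟩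
end

section
/- Let P be a period-m orbit of f with m ≥ 3. Then there exists a point v ∈ I (not necessarily in P) such that min P ≤ f^2(v) < v < f(v) and f(v) ∈ P. -/
theorem exists_point_below_its_image (a b : ℝ) (hab : a ≤ b) (f : ℝ → ℝ)
    (hcont : ContinuousOn f (Set.Icc a b))
    (hmaps : Set.MapsTo f (Set.Icc a b) (Set.Icc a b))
    (m : ℕ) (hm : 3 ≤ m)
    (x : ℝ) (hx : x ∈ Set.Icc a b) (hper : PeriodPt f m x)
    (P : Set ℝ) (hP : P = {y | ∃ i < m, y = f^[i] x}) :
    ∃ v ∈ Set.Icc a b, sInf P ≤ f^[2] v ∧ f^[2] v < v ∧ v < f v ∧ f v ∈ P := by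
  obtain ⟨hfm, hne⟩ := hper
  have hmem : ∀ n, f^[n] x ∈ P := by
    intro n
    rw [hP]
    refine ⟨n % m, Nat.mod_lt _ (by omega), ?_⟩
    have h : Function.IsPeriodicPt f m x := hfm
    exact (h.iterate_mod_apply n).symm
  have hI : ∀ n, f^[n] x ∈ Set.Icc a b := fun n => hmaps.iterate n hx
  obtain ⟨i, hi, hmin⟩ := Finset.exists_min_image (Finset.range m) (fun i => f^[i] x)
    ⟨0, by simp; omega⟩
  rw [Finset.mem_range] at hi
  have hcle : ∀ y ∈ P, f^[i] x ≤ y := by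
    intro y hy
    rw [hP] at hy
    obtain ⟨j, hj, rfl⟩ := hy
    exact hmin j (Finset.mem_range.2 hj)
  have hInf : sInf P ≤ f^[i] x :=
    csInf_le ⟨f^[i] x, fun y hy => hcle y hy⟩ (hmem i)
  have hcP : ∀ n, f^[n] (f^[i] x) ∈ P := by
    intro n
    rw [← Function.iterate_add_apply]
    exact hmem _
  have hcI : ∀ n, f^[n] (f^[i] x) ∈ Set.Icc a b := by
    intro n
    rw [← Function.iterate_add_apply]
    exact hI _
  have hcm : f^[m] (f^[i] x) = f^[i] x := by
    rw [← Function.iterate_add_apply, add_comm, Function.iterate_add_apply, hfm]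
  have hc2 : f (f (f^[i] x)) ≠ f^[i] x := by
    intro h
    apply hne 2 (by omega) (by omega)
    have h1 : f^[m - i] (f^[2] (f^[i] x)) = f^[m - i] (f^[i] x) := congrArg _ h
    rw [← Function.iterate_add_apply, ← Function.iterate_add_apply,
      ← Function.iterate_add_apply, show m - i + 2 + i = 2 + m by omega,
      show m - i + i = m by omega, Function.iterate_add_apply, hfm] at h1
    exact h1
  generalize f^[i] x = c at *
  have hfd : f (f^[m - 1] c) = c := by
    rw [← Function.iterate_succ_apply' f, show (m - 1).succ = m by omega, hcm]
  have hdP := hcP (m - 1)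
  have hdI := hcI (m - 1)
  have hcd : c < f^[m - 1] c := by
    refine lt_of_le_of_ne (hcle _ hdP) fun h => ?_
    rw [← h] at hfd
    exact hc2 (by rw [hfd, hfd])
  have hex : ∃ j, f^[m - 1] c ≤ f^[j] c := ⟨m - 1, le_rfl⟩
  generalize f^[m - 1] c = d at *
  have key : ∃ q ∈ Set.Icc a b, c ≤ q ∧ q < d ∧ d ≤ f q := by
    classical
    have h1 := Nat.find_spec hex
    have h2 := fun k => Nat.find_min (m := k) hex
    generalize Nat.find hex = j at *
    cases j with
    | zero => exact absurd hcd (not_lt.2 h1)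
    | succ k =>
      refine ⟨f^[k] c, hcI k, hcle _ (hcP k), not_le.1 (h2 k (by omega)), ?_⟩
      rwa [Function.iterate_succ_apply'] at h1
  obtain ⟨q, hqI, hcq, hqd, hdq⟩ := key
  have hsub : Set.Icc q d ⊆ Set.Icc a b := Set.Icc_subset_Icc hqI.1 hdI.2
  obtain ⟨v, hv, hfv⟩ := intermediate_value_Icc' hqd.le (hcont.mono hsub)
    (show d ∈ Set.Icc (f d) (f q) from ⟨by rw [hfd]; exact hcd.le, hdq⟩)
  have hcv : c ≠ v := by
    rintro rfl
    exact hc2 (by rw [hfv, hfd])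
  have hvd : v ≠ d := by
    rintro rfl
    rw [hfd] at hfv
    exact hcd.ne hfv
  have h2v : f^[2] v = c := by
    show f (f v) = c
    rw [hfv, hfd]
  refine ⟨v, hsub hv, ?_, ?_, ?_, ?_⟩
  · rw [h2v]; exact hInf
  · rw [h2v]; exact lt_of_le_of_ne (hcq.trans hv.1) hcv
  · rw [hfv]; exact lt_of_le_of_ne hv.2 hvd
  · rw [hfv]; exact hdP
end
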